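/- Let G be a finite simple graph and let e be an edge of G such that G − e is the disjoint union of two subgraphs A and B with v(A) ≥ 3 and λ(A) = ⌊v(A)/3⌋. Let s be an integer, where either s = 3 and v(A) ≠ 5, or s ≥ 4. If λ(B) ≥ v(B)/(s+1), then λ(G) ≥ v(G)/(s+1). -/

import Mathlib

/-- `H` is a path with `k` edges (a "k-edge path"), as a subgraph of `G`. -/
def SimpleGraph.Subgraph.IsKEdgePath {V : Type*} {G : SimpleGraph V}
    (H : G.Subgraph) (k : ℕ) : Prop :=
  ∃ (u v : V) (w : G.Walk u v), w.IsPath ∧ w.length = k ∧ H = w.toSubgraph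

/-- `H` is a tree with `k` edges (a "k-edge tree"), as a subgraph of `G`. -/
def SimpleGraph.Subgraph.IsKEdgeTree {V : Type*} {G : SimpleGraph V}
    (H : G.Subgraph) (k : ℕ) : Prop :=
  H.coe.IsTree ∧ H.edgeSet.ncard = k

/-- The maximum number of pairwise vertex-disjoint `k`-edge paths in `G`. -/
noncomputable def SimpleGraph.lambdaK {V : Type*} (G : SimpleGraph V) (k : ℕ) : ℕ :=
  sSup {n | ∃ P : Finset G.Subgraph,
    (∀ H ∈ P, H.IsKEdgePath k) ∧
    (P : Set G.Subgraph).Pairwise (fun H H' => Disjoint H.verts H'.verts) ∧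
    P.card = n}

/-- The maximum number of pairwise vertex-disjoint `k`-edge trees in `G`. -/
noncomputable def SimpleGraph.tauK {V : Type*} (G : SimpleGraph V) (k : ℕ) : ℕ :=
  sSup {n | ∃ P : Finset G.Subgraph,
    (∀ H ∈ P, H.IsKEdgeTree k) ∧
    (P : Set G.Subgraph).Pairwise (fun H H' => Disjoint H.verts H'.verts) ∧
    P.card = n}

/-!
The packings of `A` and of `B` can be chosen independently, and together they pack `G`, so
`λ(G) ≥ λ(A) + λ(B)`. With `q = ⌊v(A)/3⌋ ≥ 1` we have `v(A) ≤ 3q + 2 ≤ 5q`, and `3q + 2 ≤ 4q` as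
soon as `q ≥ 2`; hence `v(A) ≤ (s + 1) q`, the only failure for `s = 3` being `v(A) = 5`.
-/

section

open SimpleGraph

variable {V W : Type*} {G : SimpleGraph V} {G' : SimpleGraph W} {k : ℕ}

theorem verts_nonempty_of_isKEdgePath {H : G.Subgraph} (hH : H.IsKEdgePath k) :
    H.verts.Nonempty := by
  obtain ⟨u, _, w, -, -, rfl⟩ := hH
  exact ⟨u, w.start_mem_verts_toSubgraph⟩

theorem isKEdgePath_map {H : G.Subgraph} (hH : H.IsKEdgePath k) {f : G →g G'}
    (hf : Function.Injective f) : (H.map f).IsKEdgePath k := by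
  obtain ⟨u, v, w, hw, hlength, rfl⟩ := hH
  exact ⟨f u, f v, w.map f, hw.map hf, (w.length_map f).trans hlength, (w.toSubgraph_map f).symm⟩

theorem subgraph_comap_map_of_injective {f : G →g G'} (hf : Function.Injective f)
    (H : G.Subgraph) : (H.map f).comap f = H := by
  ext u v
  · simp [hf.eq_iff]
  · simpa [Relation.Map, hf.eq_iff] using H.adj_sub

theorem subgraph_map_injective {f : G →g G'} (hf : Function.Injective f) :
    Function.Injective (Subgraph.map f) :=
  Function.LeftInverse.injective (subgraph_comap_map_of_injective hf)

/-- A packing of `k`-edge paths: a finite family of pairwise vertex-disjoint `k`-edge paths of `G`,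
given as subgraphs. For finite `G`, `G.lambdaK k` is the largest cardinality of such a family. -/
structure IsPathPacking (P : Finset G.Subgraph) (k : ℕ) : Prop where
  isKEdgePath : ∀ H ∈ P, H.IsKEdgePath k
  pairwiseDisjoint : (P : Set G.Subgraph).PairwiseDisjoint Subgraph.verts

theorem lambdaK_eq_sSup_card_isPathPacking (G : SimpleGraph V) (k : ℕ) :
    G.lambdaK k = sSup {n | ∃ P : Finset G.Subgraph, IsPathPacking P k ∧ P.card = n} := by
  refine congrArg sSup (Set.ext fun n ↦ exists_congr fun P ↦ ?_)
  exact ⟨fun ⟨hpath, hdisj, hcard⟩ ↦ ⟨⟨hpath, hdisj⟩, hcard⟩,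
    fun ⟨hP, hcard⟩ ↦ ⟨hP.isKEdgePath, hP.pairwiseDisjoint, hcard⟩⟩

theorem isGreatest_lambdaK [Finite V] (G : SimpleGraph V) (k : ℕ) :
    IsGreatest {n | ∃ P : Finset G.Subgraph, IsPathPacking P k ∧ P.card = n} (G.lambdaK k) := by
  rw [lambdaK_eq_sSup_card_isPathPacking]
  have bddAbove : BddAbove {n | ∃ P : Finset G.Subgraph, IsPathPacking P k ∧ P.card = n} := by
    have := Fintype.ofFinite G.Subgraph
    refine ⟨Fintype.card G.Subgraph, ?_⟩
    rintro _ ⟨P, -, rfl⟩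
    exact P.card_le_univ
  have empty_isPathPacking : IsPathPacking (∅ : Finset G.Subgraph) k := ⟨by simp, by simp⟩
  exact ⟨Nat.sSup_mem ⟨0, ∅, empty_isPathPacking, rfl⟩ bddAbove, fun _ hn ↦ le_csSup bddAbove hn⟩

theorem exists_isPathPacking_card_eq_lambdaK [Finite V] (G : SimpleGraph V) (k : ℕ) :
    ∃ P : Finset G.Subgraph, IsPathPacking P k ∧ P.card = G.lambdaK k :=
  (isGreatest_lambdaK G k).1

namespace IsPathPacking

variable {P Q : Finset G.Subgraph}

theorem card_le_lambdaK [Finite V] (hP : IsPathPacking P k) : P.card ≤ G.lambdaK k :=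
  (isGreatest_lambdaK G k).2 ⟨P, hP, rfl⟩

theorem map (hP : IsPathPacking P k) {f : G →g G'} (hf : Function.Injective f) :
    IsPathPacking (P.map ⟨Subgraph.map f, subgraph_map_injective hf⟩) k where
  isKEdgePath := Finset.forall_mem_map.2 fun H hH ↦ isKEdgePath_map (hP.isKEdgePath H hH) hf
  pairwiseDisjoint := by
    rw [Finset.coe_map, (Function.Embedding.injective _).injOn.pairwiseDisjoint_image]
    exact fun H hH K hK hne ↦ (Set.disjoint_image_iff hf).2 (hP.pairwiseDisjoint hH hK hne)

theorem disjoint_of_disjoint_verts (hP : IsPathPacking P k)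
    (hPQ : ∀ H ∈ P, ∀ K ∈ Q, Disjoint H.verts K.verts) : Disjoint P Q :=
  Finset.disjoint_left.2 fun H hHP hHQ ↦
    (verts_nonempty_of_isKEdgePath (hP.isKEdgePath H hHP)).ne_empty
      (disjoint_self.1 (hPQ H hHP H hHQ))

theorem disjUnion (hP : IsPathPacking P k) (hQ : IsPathPacking Q k)
    (hPQ : ∀ H ∈ P, ∀ K ∈ Q, Disjoint H.verts K.verts) :
    IsPathPacking (P.disjUnion Q (hP.disjoint_of_disjoint_verts hPQ)) k where
  isKEdgePath H hH :=
    (Finset.mem_disjUnion.1 hH).elim (hP.isKEdgePath H) (hQ.isKEdgePath H)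
  pairwiseDisjoint := by
    rw [Finset.coe_disjUnion, Set.pairwiseDisjoint_union]
    exact ⟨hP.pairwiseDisjoint, hQ.pairwiseDisjoint, fun H hH K hK _ ↦ hPQ H hH K hK⟩

end IsPathPacking

theorem exists_isPathPacking_verts_subset_range [Finite V] {f : G →g G'}
    (hf : Function.Injective f) (k : ℕ) :
    ∃ P : Finset G'.Subgraph,
      IsPathPacking P k ∧ (∀ H ∈ P, H.verts ⊆ Set.range f) ∧ P.card = G.lambdaK k := by
  obtain ⟨P, hP, hcard⟩ := exists_isPathPacking_card_eq_lambdaK G k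
  exact ⟨_, hP.map hf, Finset.forall_mem_map.2 fun H _ ↦ Set.image_subset_range f H.verts,
    (Finset.card_map _).trans hcard⟩

theorem lambdaK_le_of_injective [Finite W] {f : G →g G'} (hf : Function.Injective f) (k : ℕ) :
    G.lambdaK k ≤ G'.lambdaK k := by
  have := Finite.of_injective f hf
  obtain ⟨P, hP, -, hcard⟩ := exists_isPathPacking_verts_subset_range hf k
  exact hcard ▸ hP.card_le_lambdaK

theorem lambdaK_mono [Finite V] {G₁ G₂ : SimpleGraph V} (hle : G₁ ≤ G₂) (k : ℕ) :
    G₁.lambdaK k ≤ G₂.lambdaK k :=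
  lambdaK_le_of_injective (f := Hom.ofLE hle) Function.injective_id k

theorem lambdaK_add_lambdaK_le_of_disjoint_range {V₁ V₂ : Type*} [Finite V] {G₁ : SimpleGraph V₁}
    {G₂ : SimpleGraph V₂} {f₁ : G₁ →g G} {f₂ : G₂ →g G} (hf₁ : Function.Injective f₁)
    (hf₂ : Function.Injective f₂) (hdisj : Disjoint (Set.range f₁) (Set.range f₂)) (k : ℕ) :
    G₁.lambdaK k + G₂.lambdaK k ≤ G.lambdaK k := by
  have := Finite.of_injective f₁ hf₁
  have := Finite.of_injective f₂ hf₂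
  obtain ⟨P, hP, hP_range, hP_card⟩ := exists_isPathPacking_verts_subset_range hf₁ k
  obtain ⟨Q, hQ, hQ_range, hQ_card⟩ := exists_isPathPacking_verts_subset_range hf₂ k
  have hPQ : ∀ H ∈ P, ∀ K ∈ Q, Disjoint H.verts K.verts :=
    fun H hH K hK ↦ hdisj.mono (hP_range H hH) (hQ_range K hK)
  calc G₁.lambdaK k + G₂.lambdaK k
      = (P.disjUnion Q (hP.disjoint_of_disjoint_verts hPQ)).card := by
        rw [Finset.card_disjUnion, hP_card, hQ_card]
    _ ≤ G.lambdaK k := (hP.disjUnion hQ hPQ).card_le_lambdaK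

theorem lambdaK_induce_add_lambdaK_induce_le [Finite V] (G : SimpleGraph V) {A B : Set V}
    (hAB : Disjoint A B) (k : ℕ) :
    (G.induce A).lambdaK k + (G.induce B).lambdaK k ≤ G.lambdaK k := by
  let inclusion (S : Set V) : G.induce S →g G := (Embedding.induce S).toHom
  have range_inclusion (S : Set V) : Set.range (inclusion S) = S := Subtype.range_coe
  have inclusion_injective (S : Set V) : Function.Injective (inclusion S) :=
    Subtype.val_injective
  exact lambdaK_add_lambdaK_le_of_disjoint_range (inclusion_injective A) (inclusion_injective B)
    (by rwa [range_inclusion, range_inclusion]) k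

theorem le_div_three_mul_succ {n s : ℕ} (hn : 3 ≤ n) (hs : (s = 3 ∧ n ≠ 5) ∨ 4 ≤ s) :
    n ≤ n / 3 * (s + 1) := by
  rcases hs with ⟨rfl, hn5⟩ | hs4
  · lia
  · calc n ≤ n / 3 * 5 := by lia
      _ ≤ n / 3 * (s + 1) := by gcongr; lia

theorem stmt_10_general [Fintype V] (G : SimpleGraph V) {A B : Finset V} (hAB : IsCompl A B)
    (hA3 : 3 ≤ A.card) (hlamA : A.card / 3 ≤ (G.induce (A : Set V)).lambdaK 2)
    {s : ℕ} (hs : (s = 3 ∧ A.card ≠ 5) ∨ 4 ≤ s)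
    (hB : (B.card : ℚ) / (s + 1) ≤ (G.induce (B : Set V)).lambdaK 2) :
    (Fintype.card V : ℚ) / (s + 1) ≤ G.lambdaK 2 := by
  classical
  have card_eq : Fintype.card V = A.card + B.card := by
    rw [← hAB.compl_eq, Finset.card_add_card_compl]
  have hA : (A.card : ℚ) / (s + 1) ≤ (G.induce (A : Set V)).lambdaK 2 := by
    rw [div_le_iff₀ (by positivity)]
    exact_mod_cast (le_div_three_mul_succ hA3 hs).trans (Nat.mul_le_mul_right _ hlamA)
  calc (Fintype.card V : ℚ) / (s + 1)
      = (A.card : ℚ) / (s + 1) + (B.card : ℚ) / (s + 1) := by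
        rw [card_eq, Nat.cast_add, add_div]
    _ ≤ (G.induce (A : Set V)).lambdaK 2 + (G.induce (B : Set V)).lambdaK 2 := add_le_add hA hB
    _ ≤ G.lambdaK 2 := mod_cast
        lambdaK_induce_add_lambdaK_induce_le G (Finset.disjoint_coe.2 hAB.disjoint) 2

end

/-- Let `G` be a finite simple graph and `e` an edge of `G` such that `G − e` is
the disjoint union of two subgraphs `A` and `B` with `v(A) ≥ 3` and
`λ(A) = ⌊v(A)/3⌋`.  Let `s` be an integer, where either `s = 3` and `v(A) ≠ 5`,
or `s ≥ 4`.  If `λ(B) ≥ v(B)/(s+1)`, then `λ(G) ≥ v(G)/(s+1)`. -/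
theorem stmt_10 {V : Type} [Fintype V] [DecidableEq V]
    (G : SimpleGraph V) (e : Sym2 V) (he : e ∈ G.edgeSet)
    (A B : Finset V) (hunion : A ∪ B = Finset.univ) (hdisj : Disjoint A B)
    (hsep : ∀ a ∈ A, ∀ b ∈ B, ¬ (G.deleteEdges {e}).Adj a b)
    (hA3 : 3 ≤ A.card)
    (hlamA : ((G.deleteEdges {e}).induce (A : Set V)).lambdaK 2 = A.card / 3)
    (s : ℕ) (hs : (s = 3 ∧ A.card ≠ 5) ∨ 4 ≤ s)
    (hB : (((G.deleteEdges {e}).induce (B : Set V)).lambdaK 2 : ℚ) ≥ (B.card : ℚ) / (s + 1)) :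
    (G.lambdaK 2 : ℚ) ≥ (Fintype.card V : ℚ) / (s + 1) := by
  have bound := stmt_10_general (G.deleteEdges {e}) (.of_eq hdisj.eq_bot hunion) hA3 hlamA.ge hs hB
  exact bound.trans (mod_cast lambdaK_mono (G.deleteEdges_le {e}) 2)
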